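/- arXiv:2309.11699 — 2 statements merged into one kernel-verified Lean document; each statement's English description precedes it below -/
import Mathlib

section
/- Let δ > 0 and define the time-dependent vector field H = (t^{δ+1}/(δ+1)) ∂_x + t^δ ∂_y acting on smooth functions of (t,x,y) ∈ [0,∞) × ℝ². Then for every positive integer k, the commutator of the transport operator ∂_t + y∂_x with H^k satisfies [∂_t + y∂_x, H^k] = k δ t^{δ-1} ∂_y H^{k-1}. -/
noncomputable def px (u : ℝ → ℝ → ℝ → ℝ) : ℝ → ℝ → ℝ → ℝ :=
  fun t x y => deriv (fun x' => u t x' y) x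

noncomputable def py (u : ℝ → ℝ → ℝ → ℝ) : ℝ → ℝ → ℝ → ℝ :=
  fun t x y => deriv (fun y' => u t x y') y

noncomputable def pt (u : ℝ → ℝ → ℝ → ℝ) : ℝ → ℝ → ℝ → ℝ :=
  fun t x y => deriv (fun t' => u t' x y) t

/-- The auxiliary vector field `H = (t^{δ+1}/(δ+1)) ∂_x + t^δ ∂_y`. -/
noncomputable def Hop (δ : ℝ) (u : ℝ → ℝ → ℝ → ℝ) : ℝ → ℝ → ℝ → ℝ :=
  fun t x y => t ^ (δ + 1) / (δ + 1) * px u t x y + t ^ δ * py u t x y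

open Filter Topology Set

/-- Joint smoothness of a curried function of `(t, x, y)`. -/
def JointlySmooth (u : ℝ → ℝ → ℝ → ℝ) : Prop :=
  ContDiff ℝ (⊤ : ℕ∞) (fun p : ℝ × ℝ × ℝ => u p.1 p.2.1 p.2.2)

/-- The transport operator `∂_t + y ∂_x`. -/
noncomputable def transport (u : ℝ → ℝ → ℝ → ℝ) : ℝ → ℝ → ℝ → ℝ :=
  fun t x y => pt u t x y + y * px u t x y

/-- The smooth vector field `t/(δ+1) ∂_x + ∂_y`, so that `H = t^δ L`. -/
noncomputable def Lop (δ : ℝ) (u : ℝ → ℝ → ℝ → ℝ) : ℝ → ℝ → ℝ → ℝ :=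
  fun t x y => t / (δ + 1) * px u t x y + py u t x y

namespace JointlySmooth

variable {u v : ℝ → ℝ → ℝ → ℝ}

theorem hasFDerivAt (hu : JointlySmooth u) (p : ℝ × ℝ × ℝ) :
    HasFDerivAt (fun p : ℝ × ℝ × ℝ => u p.1 p.2.1 p.2.2)
      (fderiv ℝ (fun p : ℝ × ℝ × ℝ => u p.1 p.2.1 p.2.2) p) p :=
  (ContDiff.differentiable hu (by simp) p).hasFDerivAt

theorem hasDerivAt_t_fderiv (hu : JointlySmooth u) (t x y : ℝ) :
    HasDerivAt (fun t' => u t' x y)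
      (fderiv ℝ (fun p : ℝ × ℝ × ℝ => u p.1 p.2.1 p.2.2) (t, x, y) (1, 0, 0)) t :=
  (hu.hasFDerivAt (t, x, y)).comp_hasDerivAt (f := fun t' => (t', x, y)) t
    ((hasDerivAt_id t).prodMk ((hasDerivAt_const t x).prodMk (hasDerivAt_const t y)))

theorem hasDerivAt_x_fderiv (hu : JointlySmooth u) (t x y : ℝ) :
    HasDerivAt (fun x' => u t x' y)
      (fderiv ℝ (fun p : ℝ × ℝ × ℝ => u p.1 p.2.1 p.2.2) (t, x, y) (0, 1, 0)) x :=
  (hu.hasFDerivAt (t, x, y)).comp_hasDerivAt (f := fun x' => (t, x', y)) x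
    ((hasDerivAt_const x t).prodMk ((hasDerivAt_id x).prodMk (hasDerivAt_const x y)))

theorem hasDerivAt_y_fderiv (hu : JointlySmooth u) (t x y : ℝ) :
    HasDerivAt (fun y' => u t x y')
      (fderiv ℝ (fun p : ℝ × ℝ × ℝ => u p.1 p.2.1 p.2.2) (t, x, y) (0, 0, 1)) y :=
  (hu.hasFDerivAt (t, x, y)).comp_hasDerivAt (f := fun y' => (t, x, y')) y
    ((hasDerivAt_const y t).prodMk ((hasDerivAt_const y x).prodMk (hasDerivAt_id y)))

theorem hasDerivAt_pt (hu : JointlySmooth u) (t x y : ℝ) :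
    HasDerivAt (fun t' => u t' x y) (pt u t x y) t :=
  (hu.hasDerivAt_t_fderiv t x y).differentiableAt.hasDerivAt

theorem hasDerivAt_px (hu : JointlySmooth u) (t x y : ℝ) :
    HasDerivAt (fun x' => u t x' y) (px u t x y) x :=
  (hu.hasDerivAt_x_fderiv t x y).differentiableAt.hasDerivAt

theorem hasDerivAt_py (hu : JointlySmooth u) (t x y : ℝ) :
    HasDerivAt (fun y' => u t x y') (py u t x y) y :=
  (hu.hasDerivAt_y_fderiv t x y).differentiableAt.hasDerivAt

theorem uncurry_pt (hu : JointlySmooth u) :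
    (fun p : ℝ × ℝ × ℝ => pt u p.1 p.2.1 p.2.2) =
      fun p => fderiv ℝ (fun p : ℝ × ℝ × ℝ => u p.1 p.2.1 p.2.2) p (1, 0, 0) :=
  funext fun p => (hu.hasDerivAt_t_fderiv p.1 p.2.1 p.2.2).deriv

theorem uncurry_px (hu : JointlySmooth u) :
    (fun p : ℝ × ℝ × ℝ => px u p.1 p.2.1 p.2.2) =
      fun p => fderiv ℝ (fun p : ℝ × ℝ × ℝ => u p.1 p.2.1 p.2.2) p (0, 1, 0) :=
  funext fun p => (hu.hasDerivAt_x_fderiv p.1 p.2.1 p.2.2).deriv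

theorem uncurry_py (hu : JointlySmooth u) :
    (fun p : ℝ × ℝ × ℝ => py u p.1 p.2.1 p.2.2) =
      fun p => fderiv ℝ (fun p : ℝ × ℝ × ℝ => u p.1 p.2.1 p.2.2) p (0, 0, 1) :=
  funext fun p => (hu.hasDerivAt_y_fderiv p.1 p.2.1 p.2.2).deriv

theorem contDiff_fderiv_apply (hu : JointlySmooth u) (w : ℝ × ℝ × ℝ) :
    ContDiff ℝ (⊤ : ℕ∞)
      (fun p => fderiv ℝ (fun p : ℝ × ℝ × ℝ => u p.1 p.2.1 p.2.2) p w) :=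
  (ContDiff.fderiv_right hu (m := ((⊤ : ℕ∞) : WithTop ℕ∞)) (by simp)).clm_apply contDiff_const

theorem pt (hu : JointlySmooth u) : JointlySmooth (pt u) := by
  unfold JointlySmooth
  rw [hu.uncurry_pt]
  exact hu.contDiff_fderiv_apply _

theorem px (hu : JointlySmooth u) : JointlySmooth (px u) := by
  unfold JointlySmooth
  rw [hu.uncurry_px]
  exact hu.contDiff_fderiv_apply _

theorem py (hu : JointlySmooth u) : JointlySmooth (py u) := by
  unfold JointlySmooth
  rw [hu.uncurry_py]
  exact hu.contDiff_fderiv_apply _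

theorem fderiv_fderiv_comm (hu : JointlySmooth u) (p w w' : ℝ × ℝ × ℝ) :
    fderiv ℝ (fun p => fderiv ℝ (fun p : ℝ × ℝ × ℝ => u p.1 p.2.1 p.2.2) p w) p w' =
      fderiv ℝ (fun p => fderiv ℝ (fun p : ℝ × ℝ × ℝ => u p.1 p.2.1 p.2.2) p w') p w := by
  have hd : DifferentiableAt ℝ (fderiv ℝ (fun p : ℝ × ℝ × ℝ => u p.1 p.2.1 p.2.2)) p :=
    (ContDiff.fderiv_right hu (m := ((⊤ : ℕ∞) : WithTop ℕ∞)) (by simp)).differentiable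
      (by simp) p
  have hs := (ContDiff.contDiffAt hu (x := p)).isSymmSndFDerivAt
    (by simpa using WithTop.coe_le_coe.2 (le_top : (2 : ℕ∞) ≤ ⊤))
  rw [fderiv_clm_apply hd (differentiableAt_const w),
    fderiv_clm_apply hd (differentiableAt_const w')]
  simpa using hs.eq w' w

theorem pt_px (hu : JointlySmooth u) (t x y : ℝ) :
    _root_.pt (_root_.px u) t x y = _root_.px (_root_.pt u) t x y := by
  have h1 := congrFun hu.px.uncurry_pt (t, x, y)
  have h2 := congrFun hu.pt.uncurry_px (t, x, y)
  simp only [hu.uncurry_px] at h1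
  simp only [hu.uncurry_pt] at h2
  rw [h1, h2, hu.fderiv_fderiv_comm]

theorem pt_py (hu : JointlySmooth u) (t x y : ℝ) :
    _root_.pt (_root_.py u) t x y = _root_.py (_root_.pt u) t x y := by
  have h1 := congrFun hu.py.uncurry_pt (t, x, y)
  have h2 := congrFun hu.pt.uncurry_py (t, x, y)
  simp only [hu.uncurry_py] at h1
  simp only [hu.uncurry_pt] at h2
  rw [h1, h2, hu.fderiv_fderiv_comm]

theorem px_py (hu : JointlySmooth u) (t x y : ℝ) :
    _root_.px (_root_.py u) t x y = _root_.py (_root_.px u) t x y := by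
  have h1 := congrFun hu.py.uncurry_px (t, x, y)
  have h2 := congrFun hu.px.uncurry_py (t, x, y)
  simp only [hu.uncurry_py] at h1
  simp only [hu.uncurry_px] at h2
  rw [h1, h2, hu.fderiv_fderiv_comm]

theorem transport (hu : JointlySmooth u) : JointlySmooth (transport u) :=
  ContDiff.add hu.pt (ContDiff.mul (contDiff_snd.comp contDiff_snd) hu.px)

theorem Lop (hu : JointlySmooth u) (δ : ℝ) : JointlySmooth (Lop δ u) :=
  ContDiff.add (ContDiff.mul (contDiff_fst.div_const _) hu.px) hu.py

theorem iterate_Lop (hu : JointlySmooth u) (δ : ℝ) (k : ℕ) :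
    JointlySmooth ((_root_.Lop δ)^[k] u) := by
  induction k with
  | zero => exact hu
  | succ k ih =>
    rw [Function.iterate_succ_apply']
    exact ih.Lop δ

theorem Lop_sub_smul (hu : JointlySmooth u) (hv : JointlySmooth v) (δ c : ℝ) :
    _root_.Lop δ (u - c • v) = _root_.Lop δ u - c • _root_.Lop δ v := by
  funext t x y
  have hx : _root_.px (u - c • v) t x y = _root_.px u t x y - c * _root_.px v t x y :=
    ((hu.hasDerivAt_px t x y).sub ((hv.hasDerivAt_px t x y).const_mul c)).deriv
  have hy : _root_.py (u - c • v) t x y = _root_.py u t x y - c * _root_.py v t x y :=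
    ((hu.hasDerivAt_py t x y).sub ((hv.hasDerivAt_py t x y).const_mul c)).deriv
  simp only [_root_.Lop, hx, hy, Pi.sub_apply, Pi.smul_apply, smul_eq_mul]
  ring

theorem px_Lop (hu : JointlySmooth u) (δ : ℝ) :
    _root_.px (_root_.Lop δ u) = _root_.Lop δ (_root_.px u) := by
  funext t x y
  have h : _root_.px (_root_.Lop δ u) t x y =
      t / (δ + 1) * _root_.px (_root_.px u) t x y + _root_.px (_root_.py u) t x y :=
    (((hu.px.hasDerivAt_px t x y).const_mul (t / (δ + 1))).add
      (hu.py.hasDerivAt_px t x y)).deriv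
  rw [h, hu.px_py]
  rfl

theorem transport_Lop (hu : JointlySmooth u) {δ : ℝ} (hδ : 0 < δ) :
    _root_.transport (_root_.Lop δ u) =
      _root_.Lop δ (_root_.transport u) - (δ / (δ + 1)) • _root_.px u := by
  funext t x y
  have h1 : _root_.pt (_root_.Lop δ u) t x y =
      1 / (δ + 1) * _root_.px u t x y + t / (δ + 1) * _root_.pt (_root_.px u) t x y
        + _root_.pt (_root_.py u) t x y :=
    ((((hasDerivAt_id t).div_const (δ + 1)).mul (hu.px.hasDerivAt_pt t x y)).add
      (hu.py.hasDerivAt_pt t x y)).deriv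
  have h2 : _root_.px (_root_.transport u) t x y =
      _root_.px (_root_.pt u) t x y + y * _root_.px (_root_.px u) t x y :=
    ((hu.pt.hasDerivAt_px t x y).add ((hu.px.hasDerivAt_px t x y).const_mul y)).deriv
  have h3 : _root_.py (_root_.transport u) t x y =
      _root_.py (_root_.pt u) t x y +
        (1 * _root_.px u t x y + y * _root_.py (_root_.px u) t x y) :=
    ((hu.pt.hasDerivAt_py t x y).add
      ((hasDerivAt_id y).mul (hu.px.hasDerivAt_py t x y))).deriv
  have h4 : _root_.transport (_root_.Lop δ u) t x y =
      _root_.pt (_root_.Lop δ u) t x y + y * _root_.px (_root_.Lop δ u) t x y := rfl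
  have h5 : _root_.Lop δ (_root_.transport u) t x y =
      t / (δ + 1) * _root_.px (_root_.transport u) t x y
        + _root_.py (_root_.transport u) t x y := rfl
  have h6 : _root_.Lop δ (_root_.px u) t x y =
      t / (δ + 1) * _root_.px (_root_.px u) t x y + _root_.py (_root_.px u) t x y := rfl
  simp only [Pi.sub_apply, Pi.smul_apply, smul_eq_mul]
  rw [h4, h5, h1, h2, h3, hu.px_Lop, h6, hu.pt_px, hu.pt_py]
  field_simp
  ring

theorem transport_iterate_Lop (hu : JointlySmooth u) {δ : ℝ} (hδ : 0 < δ) (k : ℕ) :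
    _root_.transport ((_root_.Lop δ)^[k + 1] u) =
      (_root_.Lop δ)^[k + 1] (_root_.transport u) -
        ((k + 1 : ℝ) * (δ / (δ + 1))) • _root_.px ((_root_.Lop δ)^[k] u) := by
  induction k with
  | zero => simpa using hu.transport_Lop hδ
  | succ k ih =>
    rw [Function.iterate_succ_apply' _ (k + 1) u,
      (hu.iterate_Lop δ (k + 1)).transport_Lop hδ, ih,
      (hu.transport.iterate_Lop δ (k + 1)).Lop_sub_smul (hu.iterate_Lop δ k).px,
      ← (hu.iterate_Lop δ k).px_Lop, ← Function.iterate_succ_apply' (_root_.Lop δ) k u,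
      ← Function.iterate_succ_apply' (_root_.Lop δ) (k + 1), sub_sub, ← add_smul]
    congr 2
    push_cast
    ring

end JointlySmooth

theorem iterate_Hop {δ : ℝ} (hδ : 0 < δ) (k : ℕ) (u : ℝ → ℝ → ℝ → ℝ) :
    (Hop δ)^[k] u = fun t x y => (t ^ δ) ^ k * (Lop δ)^[k] u t x y := by
  induction k with
  | zero => simp
  | succ k ih =>
    have ht (t : ℝ) : t ^ (δ + 1) = t ^ δ * t := by
      rcases eq_or_ne t 0 with rfl | h
      · rw [Real.zero_rpow (by positivity), mul_zero]
      · exact Real.rpow_add_one h δ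
    rw [Function.iterate_succ_apply', Function.iterate_succ_apply', ih]
    funext t x y
    simp only [Hop, Lop, px, py, deriv_const_mul_field, ht]
    ring

/-- Leibniz rule at a zero of `φ`; it holds for `deriv` even if `φ` is not differentiable. -/
theorem deriv_mul_of_continuousAt_of_eq_zero {φ g : ℝ → ℝ} {a : ℝ} (hφ : ContinuousAt φ a)
    (h0 : φ a = 0) (hg : DifferentiableAt ℝ g a) :
    deriv (fun t => φ t * g t) a = deriv φ a * g a := by
  by_cases hd : DifferentiableAt ℝ φ a
  · rw [deriv_fun_mul hd hg, h0, zero_mul, add_zero]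
  rw [deriv_zero_of_not_differentiableAt hd, zero_mul]
  by_cases hga : g a = 0
  · apply HasDerivAt.deriv
    rw [hasDerivAt_iff_tendsto_slope]
    have h1 := hasDerivAt_iff_tendsto_slope.1 hg.hasDerivAt
    have h2 := (hφ.tendsto.mono_left (nhdsWithin_le_nhds (s := {a}ᶜ))).mul h1
    rw [h0, zero_mul] at h2
    refine h2.congr fun t => ?_
    simp only [slope_def_field, hga, h0]
    ring
  · refine deriv_zero_of_not_differentiableAt fun hf => hd ?_
    refine (hf.fun_div hg hga).congr_of_eventuallyEq ?_
    filter_upwards [hg.continuousAt.eventually_ne hga] with t ht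
    field_simp

theorem deriv_rpow_pow_zero {δ : ℝ} (hδ : 0 < δ) (k : ℕ) (h1 : ¬(δ = 1 ∧ k = 0)) :
    deriv (fun t : ℝ => (t ^ δ) ^ (k + 1)) 0 = 0 := by
  by_cases hd : DifferentiableAt ℝ (fun t : ℝ => (t ^ δ) ^ (k + 1)) 0
  swap
  · exact deriv_zero_of_not_differentiableAt hd
  have hs := hasDerivAt_iff_tendsto_slope.1 hd.hasDerivAt
  set c := deriv (fun t : ℝ => (t ^ δ) ^ (k + 1)) 0
  have hr : Tendsto (fun t : ℝ => t ^ (δ * (k + 1) - 1)) (𝓝[>] 0) (𝓝 c) := by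
    refine (hs.mono_left (nhdsWithin_mono _ fun t ht => ne_of_gt ht)).congr' ?_
    filter_upwards [self_mem_nhdsWithin] with t ht
    have ht : 0 < t := ht
    rw [slope_def_field, Real.zero_rpow hδ.ne', Real.rpow_sub_one ht.ne',
      Real.rpow_mul ht.le]
    norm_cast
    simp
  rcases lt_trichotomy (δ * (k + 1)) 1 with h | h | h
  · have ht : Tendsto (fun t : ℝ => t ^ (δ * (k + 1) - 1)) (𝓝[>] 0) atTop :=
      tendsto_rpow_neg_nhdsGT_zero (by linarith)
    exact absurd hr (not_tendsto_nhds_of_tendsto_atTop ht c)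
  · have hc : c = 1 := by
      refine tendsto_nhds_unique hr ?_
      simp [h]
    have hl : Tendsto (fun _ : ℝ => -Real.cos (δ * Real.pi) ^ (k + 1)) (𝓝[<] 0) (𝓝 c) := by
      refine (hs.mono_left (nhdsWithin_mono _ fun t ht => ne_of_lt ht)).congr' ?_
      filter_upwards [self_mem_nhdsWithin] with t ht
      have ht : t < 0 := ht
      have hp : ((-t) ^ δ) ^ (k + 1) = -t := by
        rw [← Real.rpow_natCast, ← Real.rpow_mul (by linarith)]
        push_cast
        rw [h, Real.rpow_one]
      rw [slope_def_field, Real.zero_rpow hδ.ne', Real.rpow_def_of_neg ht,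
        ← Real.log_neg_eq_log, ← Real.rpow_def_of_pos (by linarith), mul_pow, hp]
      have ht0 : t ≠ 0 := ht.ne
      field_simp
      simp
      field_simp
    have hcos : -Real.cos (δ * Real.pi) ^ (k + 1) = 1 := by
      rw [← hc]
      exact tendsto_nhds_unique tendsto_const_nhds hl
    have hk : k ≠ 0 := by
      rintro rfl
      exact h1 ⟨by simpa using h, rfl⟩
    have hδ1 : δ < 1 := by
      have : (0 : ℝ) < k := by exact_mod_cast Nat.pos_of_ne_zero hk
      nlinarith
    have hsin : 0 < Real.sin (δ * Real.pi) :=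
      Real.sin_pos_of_pos_of_lt_pi (by positivity) (by nlinarith [Real.pi_pos])
    have habs : |Real.cos (δ * Real.pi)| < 1 := by
      rw [← sq_lt_one_iff_abs_lt_one]
      nlinarith [Real.sin_sq_add_cos_sq (δ * Real.pi)]
    have hlt := pow_lt_one₀ (abs_nonneg _) habs k.succ_ne_zero
    rw [← abs_pow, ← abs_neg, hcos] at hlt
    simp at hlt
  · refine tendsto_nhds_unique hr ?_
    have ht : Tendsto (fun t : ℝ => t ^ (δ * (k + 1) - 1)) (𝓝 0) (𝓝 0) := by
      have := (Real.continuousAt_rpow_const 0 (δ * (k + 1) - 1) (Or.inr (by linarith))).tendsto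
      rwa [Real.zero_rpow (by linarith)] at this
    exact ht.mono_left nhdsWithin_le_nhds

theorem deriv_rpow_pow {δ : ℝ} (hδ : 0 < δ) (k : ℕ) {t : ℝ} (ht : 0 ≤ t) :
    deriv (fun t : ℝ => (t ^ δ) ^ (k + 1)) t =
      (k + 1) * δ * t ^ (δ - 1) * (t ^ δ) ^ k := by
  rcases ht.eq_or_lt with rfl | ht
  · by_cases h : δ = 1 ∧ k = 0
    · obtain ⟨rfl, rfl⟩ := h
      simp
    · rw [deriv_rpow_pow_zero hδ k h, Real.zero_rpow hδ.ne']
      rcases not_and_or.1 h with h | h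
      · rw [Real.zero_rpow (sub_ne_zero.2 h)]
        ring
      · simp [h]
  · rw [((Real.hasDerivAt_rpow_const (p := δ) (Or.inl ht.ne')).fun_pow (k + 1)).deriv]
    push_cast
    ring

theorem deriv_rpow_pow_mul {δ : ℝ} (hδ : 0 < δ) (k : ℕ) {t : ℝ} (ht : 0 ≤ t) {g : ℝ → ℝ}
    {g' : ℝ} (hg : HasDerivAt g g' t) :
    deriv (fun t => (t ^ δ) ^ (k + 1) * g t) t =
      (k + 1) * δ * t ^ (δ - 1) * (t ^ δ) ^ k * g t + (t ^ δ) ^ (k + 1) * g' := by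
  rw [← deriv_rpow_pow hδ k ht]
  rcases ht.eq_or_lt with rfl | ht
  · have h0 : ((0 : ℝ) ^ δ) ^ (k + 1) = 0 := by simp [Real.zero_rpow hδ.ne']
    rw [deriv_mul_of_continuousAt_of_eq_zero (φ := fun t : ℝ => (t ^ δ) ^ (k + 1))
      ((Real.continuousAt_rpow_const 0 δ (Or.inr hδ.le)).pow _) h0 hg.differentiableAt, h0]
    ring
  · have hd : DifferentiableAt ℝ (fun t : ℝ => (t ^ δ) ^ (k + 1)) t :=
      (Real.differentiableAt_rpow_const_of_ne δ ht.ne').fun_pow _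
    exact (hd.hasDerivAt.mul hg).deriv

/-- Commutator identity `[∂_t + y∂_x, H^k] u = k δ t^{δ-1} ∂_y H^{k-1} u`. -/
theorem commutator_transport_Hk (δ : ℝ) (hδ : 0 < δ) (k : ℕ) (hk : 1 ≤ k)
    (u : ℝ → ℝ → ℝ → ℝ)
    (hu : ContDiff ℝ (⊤ : ℕ∞) (fun p : ℝ × ℝ × ℝ => u p.1 p.2.1 p.2.2))
    (t x y : ℝ) (ht : 0 ≤ t) :
    (pt ((Hop δ)^[k] u) t x y + y * px ((Hop δ)^[k] u) t x y)
      - ((Hop δ)^[k] (fun t' x' y' => pt u t' x' y' + y' * px u t' x' y')) t x y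
      = (k : ℝ) * δ * t ^ (δ - 1) * py ((Hop δ)^[k - 1] u) t x y := by
  obtain ⟨k, rfl⟩ := Nat.exists_eq_add_of_le' hk
  have hs : JointlySmooth u := hu
  have hL := hs.iterate_Lop δ (k + 1)
  have hT := congrFun (congrFun (congrFun (hs.transport_iterate_Lop hδ k) t) x) y
  change _ - (Hop δ)^[k + 1] (transport u) t x y = _
  simp only [transport, Pi.sub_apply, Pi.smul_apply, smul_eq_mul] at hT
  have hpt : pt ((Hop δ)^[k + 1] u) t x y =
      (k + 1) * δ * t ^ (δ - 1) * (t ^ δ) ^ k * (Lop δ)^[k + 1] u t x y +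
        (t ^ δ) ^ (k + 1) * pt ((Lop δ)^[k + 1] u) t x y := by
    rw [iterate_Hop hδ]
    exact deriv_rpow_pow_mul hδ k ht (hL.hasDerivAt_pt t x y)
  have hpx : px ((Hop δ)^[k + 1] u) t x y =
      (t ^ δ) ^ (k + 1) * px ((Lop δ)^[k + 1] u) t x y := by
    rw [iterate_Hop hδ]
    exact deriv_const_mul_field _
  have hpy : py ((Hop δ)^[k] u) t x y = (t ^ δ) ^ k * py ((Lop δ)^[k] u) t x y := by
    rw [iterate_Hop hδ]
    exact deriv_const_mul_field _
  have hLs : (Lop δ)^[k + 1] u t x y =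
      t / (δ + 1) * px ((Lop δ)^[k] u) t x y + py ((Lop δ)^[k] u) t x y := by
    rw [Function.iterate_succ_apply']
    rfl
  have hpow : t ^ δ = t ^ (δ - 1) * t := by
    rcases eq_or_ne t 0 with rfl | h
    · rw [Real.zero_rpow hδ.ne', mul_zero]
    · rw [← Real.rpow_add_one h, sub_add_cancel]
  have hH : (Hop δ)^[k + 1] (transport u) t x y =
      (t ^ δ) ^ (k + 1) * (Lop δ)^[k + 1] (transport u) t x y := by
    rw [iterate_Hop hδ]
  rw [Nat.add_sub_cancel, hpt, hpx, hpy, hLs, hH]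
  change _ = (Lop δ)^[k + 1] (transport u) t x y - _ at hT
  push_cast
  have hsucc : (t ^ δ) ^ (k + 1) = (t ^ δ) ^ k * (t ^ (δ - 1) * t) := by
    rw [pow_succ, ← hpow]
  rw [hsucc]
  linear_combination (t ^ δ) ^ k * (t ^ (δ - 1) * t) * hT
end

section
/- Let T > 0, δ > 0, C > 0, C₁ > 0. Let a(t,x,y) be smooth with a ≥ C₁ and ‖∂_x^α ∂_y^β a(t)‖_{L^∞(ℝ²)} ≤ C^{α+β+1} α! β! for all α, β ∈ ℕ, t ∈ [0,T]. Let H = (t^{δ+1}/(δ+1))∂_x + t^δ ∂_y. Then for every u ∈ C^∞([0,T]; S(ℝ²)), every t ∈ [0,T], and every k ≥ 2: −(∂_y H^k(a ∂_y u), H^k u)_{L²(ℝ²)} ≥ C₁ ‖∂_y H^k u(t)‖²_{L²} − Σ_{j=1}^{k} C(k,j) (8C(T+1)^{δ+1})^{j+1} (j−2)! ‖∂_y H^{k−j} u(t)‖_{L²} ‖∂_y H^k u(t)‖_{L²}. -/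
open MeasureTheory

/-- The `L²(ℝ²)` norm of the slice at time `t`. -/
noncomputable def L2slice (f : ℝ → ℝ → ℝ → ℝ) (t : ℝ) : ℝ :=
  Real.sqrt (∫ p : ℝ × ℝ, (f t p.1 p.2) ^ 2)

section Leibniz

open TensorProduct

theorem pow_mul_eq_sum_of_leibniz {R A : Type*} [CommRing R] [CommRing A] [Algebra R A]
    (D : Module.End R A) (hD : ∀ a b, D (a * b) = D a * b + a * D b) (k : ℕ) (a b : A) :
    (D ^ k) (a * b)
      = ∑ j ∈ Finset.range (k + 1), (k.choose j) • ((D ^ j) a * (D ^ (k - j)) b) := by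
  have hcomm : Commute (D.rTensor A) (D.lTensor A) := by
    change D.rTensor A ∘ₗ D.lTensor A = D.lTensor A ∘ₗ D.rTensor A
    rw [LinearMap.rTensor_comp_lTensor, LinearMap.lTensor_comp_rTensor]
  have hD' : D ∘ₗ LinearMap.mul' R A = LinearMap.mul' R A ∘ₗ (D.rTensor A + D.lTensor A) := by
    ext x y
    simp [hD]
  have hpow : (D ^ k) ∘ₗ LinearMap.mul' R A
      = LinearMap.mul' R A ∘ₗ ((D.rTensor A + D.lTensor A) ^ k) := by
    induction k with
    | zero => rfl
    | succ k ih =>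
      rw [pow_succ, pow_succ, Module.End.mul_eq_comp, Module.End.mul_eq_comp,
        LinearMap.comp_assoc, hD', ← LinearMap.comp_assoc, ih, LinearMap.comp_assoc]
  have h := LinearMap.congr_fun hpow (a ⊗ₜ[R] b)
  rw [hcomm.add_pow] at h
  simp only [LinearMap.comp_apply, LinearMap.mul'_apply, LinearMap.sum_apply, map_sum] at h
  rw [h]
  refine Finset.sum_congr rfl fun j _ => ?_
  rw [← nsmul_eq_mul', LinearMap.smul_apply, map_nsmul, Module.End.mul_apply,
    LinearMap.lTensor_pow, LinearMap.rTensor_pow]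
  simp

end Leibniz

/-- The algebra of smooth real functions on the plane. -/
def planeSmooth : Subalgebra ℝ (ℝ × ℝ → ℝ) where
  carrier := {f | ContDiff ℝ (⊤ : ℕ∞) f}
  mul_mem' hf hg := Set.mem_ofPred.mpr (ContDiff.mul (Set.mem_ofPred.mp hf) (Set.mem_ofPred.mp hg))
  add_mem' hf hg := Set.mem_ofPred.mpr (ContDiff.add (Set.mem_ofPred.mp hf) (Set.mem_ofPred.mp hg))
  algebraMap_mem' c := Set.mem_ofPred.mpr (contDiff_const (c := c))

namespace planeSmooth

theorem contDiff (f : planeSmooth) : ContDiff ℝ (⊤ : ℕ∞) (f : ℝ × ℝ → ℝ) := f.2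

theorem differentiable (f : planeSmooth) : Differentiable ℝ (f : ℝ × ℝ → ℝ) :=
  (planeSmooth.contDiff f).differentiable (by simp)

/-- The directional derivative along `v` on smooth functions. -/
noncomputable def dirDeriv (v : ℝ × ℝ) : Module.End ℝ planeSmooth where
  toFun f := ⟨fun p => fderiv ℝ (f : ℝ × ℝ → ℝ) p v,
    ((planeSmooth.contDiff f).fderiv_right (m := (⊤ : ℕ∞)) (by simp)).clm_apply contDiff_const⟩
  map_add' f g := by
    ext p
    simp [fderiv_add (planeSmooth.differentiable f p) (planeSmooth.differentiable g p)]
  map_smul' c f := by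
    ext p
    simp [fderiv_const_smul (planeSmooth.differentiable f p)]

theorem dirDeriv_apply (v : ℝ × ℝ) (f : planeSmooth) (p : ℝ × ℝ) :
    (dirDeriv v f : ℝ × ℝ → ℝ) p = fderiv ℝ (f : ℝ × ℝ → ℝ) p v := rfl

theorem dirDeriv_mul (v : ℝ × ℝ) (f g : planeSmooth) :
    dirDeriv v (f * g) = dirDeriv v f * g + f * dirDeriv v g := by
  ext p
  simp only [Subalgebra.coe_add, Subalgebra.coe_mul, Pi.add_apply, Pi.mul_apply, dirDeriv_apply,
    fderiv_mul (planeSmooth.differentiable f p) (planeSmooth.differentiable g p), add_apply,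
    smul_apply, smul_eq_mul]
  ring

theorem commute_dirDeriv (v w : ℝ × ℝ) : Commute (dirDeriv v) (dirDeriv w) := by
  refine LinearMap.ext fun f => Subtype.ext (funext fun p => ?_)
  have hd : DifferentiableAt ℝ (fderiv ℝ (f : ℝ × ℝ → ℝ)) p :=
    ((planeSmooth.contDiff f).fderiv_right (m := (⊤ : ℕ∞)) (by simp)).differentiable (by simp) p
  have key (v w : ℝ × ℝ) : (dirDeriv v (dirDeriv w f) : ℝ × ℝ → ℝ) p
      = fderiv ℝ (fderiv ℝ (f : ℝ × ℝ → ℝ)) p v w := by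
    change fderiv ℝ (fun q => fderiv ℝ (f : ℝ × ℝ → ℝ) q w) p v = _
    rw [fderiv_clm_apply hd (differentiableAt_const w)]
    simp
  rw [Module.End.mul_apply, Module.End.mul_apply, key, key]
  exact (planeSmooth.contDiff f).contDiffAt.isSymmSndFDerivAt
    (by simpa using WithTop.coe_le_coe.mpr (le_top : (2 : ℕ∞) ≤ ⊤)) v w

theorem dirDeriv_mk (P Q : ℝ) :
    dirDeriv (P, Q) = P • dirDeriv (1, 0) + Q • dirDeriv (0, 1) := by
  refine LinearMap.ext fun f => Subtype.ext (funext fun p => ?_)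
  have : ((P, Q) : ℝ × ℝ) = P • ((1, 0) : ℝ × ℝ) + Q • ((0, 1) : ℝ × ℝ) := by simp
  simp only [LinearMap.add_apply, LinearMap.smul_apply, Subalgebra.coe_add, Subalgebra.coe_smul,
    Pi.add_apply, Pi.smul_apply, dirDeriv_apply]
  conv_lhs => rw [this, map_add, map_smul, map_smul]

theorem abs_dirDeriv_pow_le (P Q : ℝ) (f : planeSmooth) (p : ℝ × ℝ) (j : ℕ) (c : ℕ → ℕ → ℝ)
    (hc : ∀ m n, |((dirDeriv (1, 0) ^ m) ((dirDeriv (0, 1) ^ n) f) : ℝ × ℝ → ℝ) p| ≤ c m n) :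
    |((dirDeriv (P, Q) ^ j) f : ℝ × ℝ → ℝ) p|
      ≤ ∑ i ∈ Finset.range (j + 1), (j.choose i : ℝ) * (|P| ^ i * |Q| ^ (j - i) * c i (j - i)) := by
  have hcomm : Commute (P • dirDeriv (1, 0)) (Q • dirDeriv (0, 1)) :=
    ((commute_dirDeriv _ _).smul_left P).smul_right Q
  have h : ((dirDeriv (P, Q) ^ j) f : ℝ × ℝ → ℝ) p = ∑ i ∈ Finset.range (j + 1),
      (j.choose i : ℝ) * (P ^ i * Q ^ (j - i)
        * ((dirDeriv (1, 0) ^ i) ((dirDeriv (0, 1) ^ (j - i)) f) : ℝ × ℝ → ℝ) p) := by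
    rw [dirDeriv_mk, hcomm.add_pow, LinearMap.sum_apply, AddSubmonoidClass.coe_finsetSum,
      Finset.sum_apply]
    refine Finset.sum_congr rfl fun i _ => ?_
    rw [← nsmul_eq_mul', smul_pow, smul_pow, smul_mul_smul_comm]
    simp [mul_left_comm]
  rw [h]
  refine (Finset.abs_sum_le_sum_abs _ _).trans (Finset.sum_le_sum fun i _ => ?_)
  rw [abs_mul, abs_mul, abs_mul, abs_pow, abs_pow, Nat.abs_cast]
  gcongr
  exact hc _ _

/-- Smooth functions which are Schwartz functions. -/
def IsSchwartz (f : planeSmooth) : Prop := ∃ φ : SchwartzMap (ℝ × ℝ) ℝ, (f : ℝ × ℝ → ℝ) = φ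

theorem IsSchwartz.dirDeriv {f : planeSmooth} (hf : IsSchwartz f) (v : ℝ × ℝ) :
    IsSchwartz (dirDeriv v f) := by
  obtain ⟨φ, hφ⟩ := hf
  refine ⟨LineDeriv.lineDerivOp v φ, funext fun p => ?_⟩
  rw [dirDeriv_apply, hφ, SchwartzMap.lineDerivOp_apply_eq_fderiv]

theorem IsSchwartz.dirDeriv_pow {f : planeSmooth} (hf : IsSchwartz f) (v : ℝ × ℝ) (j : ℕ) :
    IsSchwartz ((planeSmooth.dirDeriv v ^ j) f) := by
  induction j with
  | zero => simpa using hf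
  | succ j ih => rw [pow_succ', Module.End.mul_apply]; exact ih.dirDeriv v

theorem IsSchwartz.memLp_two {f : planeSmooth} (hf : IsSchwartz f) :
    MemLp (f : ℝ × ℝ → ℝ) 2 := by
  obtain ⟨φ, hφ⟩ := hf
  rw [hφ]
  exact φ.memLp 2

theorem integrable_mul_mul {b f g : planeSmooth} (hb : ∃ K, ∀ p, |(b : ℝ × ℝ → ℝ) p| ≤ K)
    (hf : IsSchwartz f) (hg : IsSchwartz g) :
    Integrable fun p => (b : ℝ × ℝ → ℝ) p * ((f : ℝ × ℝ → ℝ) p * (g : ℝ × ℝ → ℝ) p) := by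
  obtain ⟨K, hK⟩ := hb
  exact (hf.memLp_two.integrable_mul hg.memLp_two).bdd_mul (c := K)
    (planeSmooth.contDiff b).continuous.aestronglyMeasurable (Filter.Eventually.of_forall hK)

/-- Integration by parts against a Schwartz function, for a bounded coefficient. -/
theorem integral_dirDeriv_mul {b f g : planeSmooth} (v : ℝ × ℝ)
    (hb : ∃ K, ∀ p, |(b : ℝ × ℝ → ℝ) p| ≤ K)
    (hb' : ∃ K, ∀ p, |(dirDeriv v b : ℝ × ℝ → ℝ) p| ≤ K)
    (hf : IsSchwartz f) (hg : IsSchwartz g) :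
    Integrable (fun p => (dirDeriv v (b * f) : ℝ × ℝ → ℝ) p * (g : ℝ × ℝ → ℝ) p) ∧
    ∫ p, (dirDeriv v (b * f) : ℝ × ℝ → ℝ) p * (g : ℝ × ℝ → ℝ) p
      = -∫ p, (b : ℝ × ℝ → ℝ) p * ((f : ℝ × ℝ → ℝ) p * (dirDeriv v g : ℝ × ℝ → ℝ) p) := by
  have h₁ : Integrable fun p => (dirDeriv v (b * f) : ℝ × ℝ → ℝ) p * (g : ℝ × ℝ → ℝ) p := by
    refine ((integrable_mul_mul hb' hf hg).add (integrable_mul_mul hb (hf.dirDeriv v) hg)).congr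
      (Filter.Eventually.of_forall fun p => ?_)
    simp only [dirDeriv_mul, Subalgebra.coe_add, Subalgebra.coe_mul, Pi.add_apply, Pi.mul_apply]
    ring
  refine ⟨h₁, ?_⟩
  have h₂ := integrable_mul_mul hb hf (hg.dirDeriv v)
  have h₃ := integrable_mul_mul hb hf hg
  simp only [← mul_assoc] at h₂ h₃ ⊢
  have h := integral_mul_fderiv_eq_neg_fderiv_mul_of_integrable (v := v) (μ := volume)
    (f := ((b * f : planeSmooth) : ℝ × ℝ → ℝ)) (g := (g : ℝ × ℝ → ℝ)) h₁ h₂ h₃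
    (fun p _ => planeSmooth.differentiable (b * f) p) (fun p _ => planeSmooth.differentiable g p)
  rw [eq_neg_iff_add_eq_zero, add_comm, ← eq_neg_iff_add_eq_zero]
  exact h

theorem integral_mul_sq_ge {b f : planeSmooth} {c : ℝ} (hc : ∀ p, c ≤ (b : ℝ × ℝ → ℝ) p)
    (hb : ∃ K, ∀ p, |(b : ℝ × ℝ → ℝ) p| ≤ K) (hf : IsSchwartz f) :
    c * √(∫ p, (f : ℝ × ℝ → ℝ) p ^ 2) ^ 2
      ≤ ∫ p, (b : ℝ × ℝ → ℝ) p * ((f : ℝ × ℝ → ℝ) p * (f : ℝ × ℝ → ℝ) p) := by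
  rw [Real.sq_sqrt (integral_nonneg fun p => sq_nonneg _), ← integral_const_mul]
  refine integral_mono (hf.memLp_two.integrable_sq.const_mul c) (integrable_mul_mul hb hf hf)
    fun p => ?_
  simp only [← sq]
  exact mul_le_mul_of_nonneg_right (hc p) (sq_nonneg _)

theorem abs_integral_mul_mul_le {b f g : planeSmooth} {K : ℝ}
    (hK : ∀ p, |(b : ℝ × ℝ → ℝ) p| ≤ K) (hf : IsSchwartz f) (hg : IsSchwartz g) :
    |∫ p, (b : ℝ × ℝ → ℝ) p * ((f : ℝ × ℝ → ℝ) p * (g : ℝ × ℝ → ℝ) p)|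
      ≤ K * (√(∫ p, (f : ℝ × ℝ → ℝ) p ^ 2) * √(∫ p, (g : ℝ × ℝ → ℝ) p ^ 2)) := by
  have hK0 : 0 ≤ K := (abs_nonneg _).trans (hK 0)
  have hcs := integral_mul_norm_le_Lp_mul_Lq (μ := volume) Real.HolderConjugate.two_two
    (f := (f : ℝ × ℝ → ℝ)) (g := (g : ℝ × ℝ → ℝ))
    (by simpa using hf.memLp_two) (by simpa using hg.memLp_two)
  simp only [Real.rpow_two, Real.norm_eq_abs, sq_abs, ← Real.sqrt_eq_rpow] at hcs
  refine abs_integral_le_integral_abs.trans (le_trans ?_ (mul_le_mul_of_nonneg_left hcs hK0))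
  rw [← integral_const_mul]
  have hfg := (hf.memLp_two.integrable_mul hg.memLp_two).abs.const_mul K
  refine integral_mono (integrable_mul_mul ⟨K, hK⟩ hf hg).abs (by simpa [abs_mul] using hfg)
    fun p => ?_
  simp only [abs_mul]
  exact mul_le_mul_of_nonneg_right (hK p) (by positivity)

theorem coercivity {b f : planeSmooth} {c : ℝ} {v w : ℝ × ℝ} {K : ℕ → ℝ} (k : ℕ)
    (hc : ∀ p, c ≤ (b : ℝ × ℝ → ℝ) p)
    (hb : ∃ K, ∀ p, |(b : ℝ × ℝ → ℝ) p| ≤ K)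
    (hK : ∀ j, 1 ≤ j → ∀ p, |((dirDeriv w ^ j) b : ℝ × ℝ → ℝ) p| ≤ K j)
    (hb' : ∀ j, ∃ K, ∀ p, |(dirDeriv v ((dirDeriv w ^ j) b) : ℝ × ℝ → ℝ) p| ≤ K)
    (hf : IsSchwartz f) :
    c * √(∫ p, (dirDeriv v ((dirDeriv w ^ k) f) : ℝ × ℝ → ℝ) p ^ 2) ^ 2
      - ∑ j ∈ Finset.Icc 1 k, (k.choose j : ℝ) * K j
          * √(∫ p, (dirDeriv v ((dirDeriv w ^ (k - j)) f) : ℝ × ℝ → ℝ) p ^ 2)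
          * √(∫ p, (dirDeriv v ((dirDeriv w ^ k) f) : ℝ × ℝ → ℝ) p ^ 2)
      ≤ -∫ p, (dirDeriv v ((dirDeriv w ^ k) (b * dirDeriv v f)) : ℝ × ℝ → ℝ) p
          * ((dirDeriv w ^ k) f : ℝ × ℝ → ℝ) p := by
  have hbd (j : ℕ) : ∃ K, ∀ p, |((dirDeriv w ^ j) b : ℝ × ℝ → ℝ) p| ≤ K := by
    rcases Nat.eq_zero_or_pos j with rfl | hj
    · simpa using hb
    · exact ⟨K j, hK j hj⟩
  have hcomm (j : ℕ) : (dirDeriv w ^ j) (dirDeriv v f) = dirDeriv v ((dirDeriv w ^ j) f) :=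
    LinearMap.congr_fun ((commute_dirDeriv w v).pow_left j) f
  have hg := hf.dirDeriv_pow w k
  have hf' (j : ℕ) := (hf.dirDeriv_pow w j).dirDeriv v
  have hibp (j : ℕ) := integral_dirDeriv_mul v (hbd j) (hb' j) (hf' (k - j)) hg
  have hexp : -∫ p, (dirDeriv v ((dirDeriv w ^ k) (b * dirDeriv v f)) : ℝ × ℝ → ℝ) p
          * ((dirDeriv w ^ k) f : ℝ × ℝ → ℝ) p
      = ∑ j ∈ Finset.range (k + 1), (k.choose j : ℝ)
        * ∫ p, ((dirDeriv w ^ j) b : ℝ × ℝ → ℝ) p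
          * ((dirDeriv v ((dirDeriv w ^ (k - j)) f) : ℝ × ℝ → ℝ) p
            * (dirDeriv v ((dirDeriv w ^ k) f) : ℝ × ℝ → ℝ) p) := by
    have hpt (p : ℝ × ℝ) : (dirDeriv v ((dirDeriv w ^ k) (b * dirDeriv v f)) : ℝ × ℝ → ℝ) p
          * ((dirDeriv w ^ k) f : ℝ × ℝ → ℝ) p
        = ∑ j ∈ Finset.range (k + 1), (k.choose j : ℝ) *
          ((dirDeriv v ((dirDeriv w ^ j) b * dirDeriv v ((dirDeriv w ^ (k - j)) f)) :
            ℝ × ℝ → ℝ) p * ((dirDeriv w ^ k) f : ℝ × ℝ → ℝ) p) := by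
      rw [pow_mul_eq_sum_of_leibniz _ (dirDeriv_mul w), map_sum,
        AddSubmonoidClass.coe_finsetSum, Finset.sum_apply, Finset.sum_mul]
      refine Finset.sum_congr rfl fun j _ => ?_
      rw [hcomm, map_nsmul]
      simp [mul_assoc]
    simp_rw [hpt]
    rw [integral_finsetSum _ fun j _ => (hibp j).1.const_mul _, ← Finset.sum_neg_distrib]
    refine Finset.sum_congr rfl fun j _ => ?_
    rw [integral_const_mul, (hibp j).2, mul_neg, neg_neg]
  rw [hexp, Finset.range_eq_Ico, Finset.sum_eq_sum_Ico_succ_bot (Nat.succ_pos k), zero_add,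
    sub_eq_add_neg, ← Finset.sum_neg_distrib]
  refine add_le_add ?_ ?_
  · simpa using integral_mul_sq_ge hc hb (hf' k)
  · change _ ≤ ∑ j ∈ Finset.Icc 1 k, _
    refine Finset.sum_le_sum fun j hj => ?_
    have := neg_le_of_abs_le
      (abs_integral_mul_mul_le (hK j (Finset.mem_Icc.mp hj).1) (hf' (k - j)) (hf' k))
    refine le_trans (le_of_eq ?_) (mul_le_mul_of_nonneg_left this (Nat.cast_nonneg (k.choose j)))
    ring

end planeSmooth

section Slice

open planeSmooth

/-- The slice of `g` at time `t` is the smooth function `f`. -/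
def HasSlice (g : ℝ → ℝ → ℝ → ℝ) (t : ℝ) (f : planeSmooth) : Prop :=
  ∀ p : ℝ × ℝ, g t p.1 p.2 = (f : ℝ × ℝ → ℝ) p

variable {g : ℝ → ℝ → ℝ → ℝ} {t : ℝ} {f : planeSmooth}

theorem ContDiff.exists_hasSlice
    (hg : ContDiff ℝ (⊤ : ℕ∞) (fun p : ℝ × ℝ × ℝ => g p.1 p.2.1 p.2.2)) (t : ℝ) :
    ∃ f, HasSlice g t f :=
  ⟨⟨fun p => g t p.1 p.2, hg.comp (contDiff_const.prodMk contDiff_id)⟩, fun _ => rfl⟩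

theorem HasSlice.px (h : HasSlice g t f) : HasSlice (px g) t (dirDeriv (1, 0) f) := by
  intro p
  have hd : HasDerivAt (fun x : ℝ => (x, p.2)) ((1, 0) : ℝ × ℝ) p.1 :=
    (hasDerivAt_id p.1).prodMk (hasDerivAt_const p.1 p.2)
  have h' : (fun x => g t x p.2) = (f : ℝ × ℝ → ℝ) ∘ fun x => (x, p.2) :=
    funext fun x => h (x, p.2)
  change deriv (fun x => g t x p.2) p.1 = _
  rw [h', dirDeriv_apply]
  exact ((planeSmooth.differentiable f p).hasFDerivAt.comp_hasDerivAt p.1 hd).deriv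

theorem HasSlice.py (h : HasSlice g t f) : HasSlice (py g) t (dirDeriv (0, 1) f) := by
  intro p
  have hd : HasDerivAt (fun y : ℝ => (p.1, y)) ((0, 1) : ℝ × ℝ) p.2 :=
    (hasDerivAt_const p.2 p.1).prodMk (hasDerivAt_id p.2)
  have h' : (fun y => g t p.1 y) = (f : ℝ × ℝ → ℝ) ∘ fun y => (p.1, y) :=
    funext fun y => h (p.1, y)
  change deriv (fun y => g t p.1 y) p.2 = _
  rw [h', dirDeriv_apply]
  exact ((planeSmooth.differentiable f p).hasFDerivAt.comp_hasDerivAt p.2 hd).deriv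

theorem HasSlice.Hop (h : HasSlice g t f) (δ : ℝ) :
    HasSlice (Hop δ g) t (dirDeriv (t ^ (δ + 1) / (δ + 1), t ^ δ) f) := by
  intro p
  rw [dirDeriv_mk]
  change _ * _ + _ * _ = _
  rw [h.px p, h.py p]
  rfl

theorem HasSlice.mul {g' : ℝ → ℝ → ℝ → ℝ} {f' : planeSmooth} (h : HasSlice g t f)
    (h' : HasSlice g' t f') : HasSlice (fun t x y => g t x y * g' t x y) t (f * f') :=
  fun p => congrArg₂ (· * ·) (h p) (h' p)

theorem HasSlice.iterate {F : (ℝ → ℝ → ℝ → ℝ) → ℝ → ℝ → ℝ → ℝ} {D : Module.End ℝ planeSmooth}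
    (hF : ∀ {g f}, HasSlice g t f → HasSlice (F g) t (D f)) (h : HasSlice g t f) (j : ℕ) :
    HasSlice (F^[j] g) t ((D ^ j) f) := by
  induction j with
  | zero => exact h
  | succ j ih =>
    rw [Function.iterate_succ_apply', pow_succ', Module.End.mul_apply]
    exact hF ih

theorem HasSlice.L2slice_eq (h : HasSlice g t f) :
    L2slice g t = √(∫ p, (f : ℝ × ℝ → ℝ) p ^ 2) := by
  simp only [L2slice, h _]

end Slice

theorem add_one_mul_factorial_le (j : ℕ) :
    (j + 1) * j.factorial ≤ 8 ^ (j + 1) * (j - 2).factorial := by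
  rcases j with _ | _ | n
  · simp
  · simp
  · rw [show n + 1 + 1 - 2 = n from rfl, Nat.factorial_succ, Nat.factorial_succ, ← mul_assoc, ← mul_assoc]
    refine Nat.mul_le_mul_right _ ?_
    have h : n + 3 ≤ 2 ^ (n + 3) := Nat.lt_two_pow_self.le
    calc (n + 3) * (n + 2) * (n + 1) ≤ 2 ^ (n + 3) * 2 ^ (n + 3) * 2 ^ (n + 3) := by gcongr <;> omega
      _ = 8 ^ (n + 3) := by rw [← mul_pow, ← mul_pow]; norm_num

theorem planeSmooth.abs_dirDeriv_pow_le_of_analytic {P Q C M : ℝ} {b : planeSmooth} {p : ℝ × ℝ}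
    (hC : 0 < C) (hM : 1 ≤ M) (hP : |P| ≤ M) (hQ : |Q| ≤ M)
    (hb : ∀ m n, |((dirDeriv (1, 0) ^ m) ((dirDeriv (0, 1) ^ n) b) : ℝ × ℝ → ℝ) p|
      ≤ C ^ (m + n + 1) * m.factorial * n.factorial) (j : ℕ) :
    |((dirDeriv (P, Q) ^ j) b : ℝ × ℝ → ℝ) p| ≤ (8 * C * M) ^ (j + 1) * (j - 2).factorial := by
  refine (abs_dirDeriv_pow_le P Q b p j _ hb).trans ?_
  have hterm : ∀ i ∈ Finset.range (j + 1), (j.choose i : ℝ) * (|P| ^ i * |Q| ^ (j - i)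
      * (C ^ (i + (j - i) + 1) * i.factorial * (j - i).factorial))
      ≤ M ^ j * (C ^ (j + 1) * j.factorial) := by
    intro i hi
    have hij : i ≤ j := Nat.lt_succ_iff.mp (Finset.mem_range.mp hi)
    have hfac : (j.choose i : ℝ) * i.factorial * (j - i).factorial = j.factorial := by
      exact_mod_cast Nat.choose_mul_factorial_mul_factorial hij
    have hMj : M ^ j = M ^ i * M ^ (j - i) := by rw [← pow_add, Nat.add_sub_cancel' hij]
    rw [Nat.add_sub_cancel' hij, ← hfac, hMj]
    calc _ = |P| ^ i * |Q| ^ (j - i) * (C ^ (j + 1)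
          * ((j.choose i : ℝ) * i.factorial * (j - i).factorial)) := by ring
      _ ≤ _ := by gcongr
  refine (Finset.sum_le_sum hterm).trans ?_
  have hnum : ((j : ℝ) + 1) * j.factorial ≤ 8 ^ (j + 1) * (j - 2).factorial := by
    exact_mod_cast add_one_mul_factorial_le j
  rw [Finset.sum_const, Finset.card_range, nsmul_eq_mul]
  push_cast
  calc ((j : ℝ) + 1) * (M ^ j * (C ^ (j + 1) * j.factorial))
      = (((j : ℝ) + 1) * j.factorial) * (C ^ (j + 1) * M ^ j) := by ring
    _ ≤ (8 ^ (j + 1) * (j - 2).factorial) * (C ^ (j + 1) * M ^ (j + 1)) := by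
      gcongr
      exact Nat.le_succ j
    _ = _ := by rw [mul_pow, mul_pow]; ring

/-- Lower bound for `-(∂_y H^k (a ∂_y u), H^k u)_{L²(ℝ²)}`. -/
theorem coercivity_Hk (T δ C C₁ : ℝ) (hT : 0 < T) (hδ : 0 < δ) (hC : 0 < C) (hC₁ : 0 < C₁)
    (a u : ℝ → ℝ → ℝ → ℝ)
    (ha_smooth : ContDiff ℝ (⊤ : ℕ∞) (fun p : ℝ × ℝ × ℝ => a p.1 p.2.1 p.2.2))
    (ha_lb : ∀ t x y : ℝ, C₁ ≤ a t x y)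
    (ha_bd : ∀ α β : ℕ, ∀ t ∈ Set.Icc (0 : ℝ) T, ∀ x y : ℝ,
      |(px^[α] (py^[β] a)) t x y| ≤ C ^ (α + β + 1) * (Nat.factorial α) * (Nat.factorial β))
    (hu_smooth : ContDiff ℝ (⊤ : ℕ∞) (fun p : ℝ × ℝ × ℝ => u p.1 p.2.1 p.2.2))
    (hu_schwartz : ∀ t : ℝ, ∃ v : SchwartzMap (ℝ × ℝ) ℝ, ∀ x y : ℝ, u t x y = v (x, y))
    (k : ℕ) (hk : 2 ≤ k) :
    ∀ t ∈ Set.Icc (0 : ℝ) T,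
      C₁ * (L2slice (py ((Hop δ)^[k] u)) t) ^ 2
        - ∑ j ∈ Finset.Icc 1 k,
            (k.choose j : ℝ) * (8 * C * (T + 1) ^ (δ + 1)) ^ (j + 1)
              * (Nat.factorial (j - 2))
              * L2slice (py ((Hop δ)^[k - j] u)) t
              * L2slice (py ((Hop δ)^[k] u)) t
      ≤ -∫ p : ℝ × ℝ,
          (py ((Hop δ)^[k] (fun t' x' y' => a t' x' y' * py u t' x' y'))) t p.1 p.2
            * ((Hop δ)^[k] u) t p.1 p.2 := by
  intro t ht
  obtain ⟨b, hb⟩ := ha_smooth.exists_hasSlice t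
  obtain ⟨f, hf⟩ := hu_smooth.exists_hasSlice t
  have hfS : planeSmooth.IsSchwartz f := by
    obtain ⟨φ, hφ⟩ := hu_schwartz t
    exact ⟨φ, funext fun p => (hf p).symm.trans (hφ p.1 p.2)⟩
  have hbd (p : ℝ × ℝ) (m n : ℕ) :
      |((planeSmooth.dirDeriv (1, 0) ^ m) ((planeSmooth.dirDeriv (0, 1) ^ n) b) : ℝ × ℝ → ℝ) p|
        ≤ C ^ (m + n + 1) * m.factorial * n.factorial := by
    rw [← HasSlice.iterate HasSlice.px (HasSlice.iterate HasSlice.py hb n) m p]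
    exact ha_bd m n t ht p.1 p.2
  have hM : 1 ≤ (T + 1) ^ (δ + 1) := Real.one_le_rpow (by linarith) (by linarith)
  have hP : |t ^ (δ + 1) / (δ + 1)| ≤ (T + 1) ^ (δ + 1) := by
    have h0 := Real.rpow_nonneg ht.1 (δ + 1)
    rw [abs_of_nonneg (by positivity)]
    exact (div_le_self h0 (by linarith)).trans
      (Real.rpow_le_rpow ht.1 (by linarith [ht.2]) (by linarith))
  have hQ : |t ^ δ| ≤ (T + 1) ^ (δ + 1) := by
    rw [abs_of_nonneg (Real.rpow_nonneg ht.1 δ)]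
    exact (Real.rpow_le_rpow ht.1 (by linarith [ht.2]) hδ.le).trans
      (Real.rpow_le_rpow_of_exponent_le (by linarith) (by linarith))
  have hcoef (j : ℕ) (p : ℝ × ℝ) :=
    planeSmooth.abs_dirDeriv_pow_le_of_analytic hC hM hP hQ (hbd p) j
  have hcoef' (j : ℕ) : ∃ K, ∀ p, |(planeSmooth.dirDeriv (0, 1)
      ((planeSmooth.dirDeriv (t ^ (δ + 1) / (δ + 1), t ^ δ) ^ j) b) : ℝ × ℝ → ℝ) p| ≤ K := by
    have hcomm := LinearMap.congr_fun ((planeSmooth.commute_dirDeriv (0, 1)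
      (t ^ (δ + 1) / (δ + 1), t ^ δ)).pow_right j) b
    rw [Module.End.mul_apply, Module.End.mul_apply] at hcomm
    rw [hcomm]
    exact ⟨_, fun p => planeSmooth.abs_dirDeriv_pow_le _ _ _ p j _ fun m n => by
      rw [← Module.End.mul_apply (_ ^ n), ← pow_succ]
      exact hbd p m (n + 1)⟩
  have hu (j : ℕ) := HasSlice.iterate (HasSlice.Hop · δ) hf j
  have hau := (HasSlice.iterate (HasSlice.Hop · δ) (hb.mul hf.py) k).py
  have hmain := planeSmooth.coercivity k (v := (0, 1)) (fun p => hb p ▸ ha_lb t p.1 p.2)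
    ⟨_, fun p => by simpa using hbd p 0 0⟩ (fun j _ => hcoef j) hcoef' hfS
  simp only [(hu _).py.L2slice_eq, hau _, hu k _]
  simpa only [mul_assoc] using hmain
end
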